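/- arXiv:2403.03676 — 3 statements merged into one kernel-verified Lean document; each statement's English description precedes it below -/
import Mathlib

section
/- Let L and L_p be real m×m matrices with operator norms ‖L‖₂ ≤ 1 and ‖L_p‖₂ ≤ 1, and let c_1, …, c_N be real numbers (with an arbitrary real c_0). Then ‖Σ_{n=0}^{N} c_n·(−L_p)^n/n! − Σ_{n=0}^{N} c_n·(−L)^n/n!‖₂ ≤ (Σ_{n=1}^{N} |c_n|/(n−1)!) · ‖L_p − L‖₂. In particular, the spectral filter h(L) = Σ_{n=0}^{N} c_n·(−L)^n/n! is linearly stable with stability constant C = Σ_{n=1}^{N} |c_n|/(n−1)!. -/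
/-!
Powers of non-commuting `a` and `b` telescope through
`a ^ (k + 1) - b ^ (k + 1) = a ^ k * (a - b) + (a ^ k - b ^ k) * b`, so on the ball of radius `r`
the map `a ↦ a ^ n` is Lipschitz with the same constant `n * r ^ (n - 1)` as in the scalar case.
Summing over `n` with weights `|c n| / n!` and cancelling `n / n! = 1 / (n - 1)!` gives the
stability constant.
-/

/-- The operator norm (spectral norm) of a real square matrix, i.e. the norm
induced by the Euclidean vector norm. -/
noncomputable def l2OpNorm {m : ℕ} (A : Matrix (Fin m) (Fin m) ℝ) : ℝ :=
  ‖Matrix.toEuclideanCLM (𝕜 := ℝ) A‖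

section PowerLipschitz

variable {R : Type*} [SeminormedRing R]

-- In a seminormed ring `‖1‖` may exceed `1`, so `‖a ^ n‖ ≤ ‖a‖ ^ n` can fail at `n = 0`.
theorem norm_pow_mul_le (a x : R) (n : ℕ) : ‖a ^ n * x‖ ≤ ‖a‖ ^ n * ‖x‖ := by
  induction n with
  | zero => simp only [pow_zero, one_mul, le_refl]
  | succ k ih =>
    calc ‖a ^ (k + 1) * x‖ = ‖a * (a ^ k * x)‖ := by rw [pow_succ', mul_assoc]
      _ ≤ ‖a‖ * ‖a ^ k * x‖ := norm_mul_le _ _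
      _ ≤ ‖a‖ * (‖a‖ ^ k * ‖x‖) := by gcongr
      _ = ‖a‖ ^ (k + 1) * ‖x‖ := by ring

theorem norm_pow_sub_pow_le {a b : R} {r : ℝ} (ha : ‖a‖ ≤ r) (hb : ‖b‖ ≤ r) (n : ℕ) :
    ‖a ^ n - b ^ n‖ ≤ n * r ^ (n - 1) * ‖a - b‖ := by
  have hr : 0 ≤ r := (norm_nonneg a).trans ha
  induction n with
  | zero => simp
  | succ k ih =>
    have telescope : a ^ (k + 1) - b ^ (k + 1) = a ^ k * (a - b) + (a ^ k - b ^ k) * b := by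
      noncomm_ring
    have first_le : ‖a ^ k * (a - b)‖ ≤ r ^ k * ‖a - b‖ :=
      (norm_pow_mul_le a (a - b) k).trans (by gcongr)
    have second_le : ‖(a ^ k - b ^ k) * b‖ ≤ k * r ^ (k - 1) * ‖a - b‖ * r :=
      (norm_mul_le _ _).trans (by gcongr)
    calc ‖a ^ (k + 1) - b ^ (k + 1)‖
        ≤ r ^ k * ‖a - b‖ + k * r ^ (k - 1) * ‖a - b‖ * r := by
          rw [telescope]
          exact norm_add_le_of_le first_le second_le
      _ = (k + 1 : ℕ) * r ^ (k + 1 - 1) * ‖a - b‖ := by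
          cases k <;> simp only [Nat.add_sub_cancel] <;> push_cast <;> ring

theorem norm_sum_smul_pow_sub_sum_smul_pow_le {𝕜 : Type*} [SeminormedRing 𝕜] [Module 𝕜 R]
    [IsBoundedSMul 𝕜 R] {a b : R} {r : ℝ} (ha : ‖a‖ ≤ r) (hb : ‖b‖ ≤ r) (s : Finset ℕ)
    (c : ℕ → 𝕜) :
    ‖∑ n ∈ s, c n • a ^ n - ∑ n ∈ s, c n • b ^ n‖ ≤
      (∑ n ∈ s, ‖c n‖ * (n * r ^ (n - 1))) * ‖a - b‖ := by
  simp only [← Finset.sum_sub_distrib, ← smul_sub, Finset.sum_mul, mul_assoc (‖c _‖)]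
  refine norm_sum_le_of_le s fun n _ => (norm_smul_le _ _).trans ?_
  gcongr
  exact norm_pow_sub_pow_le ha hb n

end PowerLipschitz

theorem natCast_div_factorial {K : Type*} [Semifield K] [CharZero K] {n : ℕ} (hn : n ≠ 0) :
    (n : K) / n.factorial = 1 / (n - 1).factorial := by
  have hn' : (n : K) ≠ 0 := Nat.cast_ne_zero.mpr hn
  rw [← Nat.mul_factorial_pred hn, Nat.cast_mul, div_mul_cancel_left₀ hn', one_div]

theorem spcnet_filter_linearly_stable_general {𝕜 R : Type*} [RCLike 𝕜] [SeminormedRing R]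
    [Module 𝕜 R] [IsBoundedSMul 𝕜 R] {a b : R} {r : ℝ} (ha : ‖a‖ ≤ r) (hb : ‖b‖ ≤ r) (N : ℕ)
    (c : ℕ → 𝕜) :
    ‖∑ n ∈ Finset.range (N + 1), (c n / n.factorial) • (-b) ^ n -
        ∑ n ∈ Finset.range (N + 1), (c n / n.factorial) • (-a) ^ n‖ ≤
      (∑ n ∈ Finset.Icc 1 N, ‖c n‖ * r ^ (n - 1) / (n - 1).factorial) * ‖b - a‖ := by
  have weight_eq : ∀ n ∈ Finset.Icc 1 N, ‖c n‖ * r ^ (n - 1) / (n - 1).factorial =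
      ‖c n / n.factorial‖ * (n * r ^ (n - 1)) := fun n hn => by
    have hn0 : n ≠ 0 := Nat.one_le_iff_ne_zero.mp (Finset.mem_Icc.mp hn).1
    calc ‖c n‖ * r ^ (n - 1) / (n - 1).factorial
        = ‖c n‖ * r ^ (n - 1) * (n / n.factorial) := by
          rw [natCast_div_factorial hn0, mul_one_div]
      _ = ‖c n / n.factorial‖ * (n * r ^ (n - 1)) := by
          rw [norm_div, RCLike.norm_natCast]
          ring
  have sum_eq : ∑ n ∈ Finset.Icc 1 N, ‖c n‖ * r ^ (n - 1) / (n - 1).factorial =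
      ∑ n ∈ Finset.range (N + 1), ‖c n / n.factorial‖ * (n * r ^ (n - 1)) := by
    refine Finset.sum_subset_zero_on_sdiff (fun n hn => ?_) (fun n hn => ?_) weight_eq
    · grind
    · obtain rfl : n = 0 := by grind
      simp only [Nat.cast_zero, zero_mul, mul_zero]
  rw [sum_eq, norm_sub_rev b a, ← neg_sub_neg b a]
  exact norm_sum_smul_pow_sub_sum_smul_pow_le (by rwa [norm_neg]) (by rwa [norm_neg]) _ _

/-- Stability of the SPCNet filter `h(L) = Σ_{n=0}^{N} c_n · (−L)^n / n!`:
for `‖L‖₂ ≤ 1` and `‖L_p‖₂ ≤ 1`,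
`‖h(L_p) − h(L)‖₂ ≤ (Σ_{n=1}^{N} |c_n|/(n−1)!) · ‖L_p − L‖₂`. -/
theorem spcnet_filter_linearly_stable {m : ℕ} (L Lp : Matrix (Fin m) (Fin m) ℝ)
    (hL : l2OpNorm L ≤ 1) (hLp : l2OpNorm Lp ≤ 1) (N : ℕ) (c : ℕ → ℝ) :
    l2OpNorm (∑ n ∈ Finset.range (N + 1), (c n / n.factorial) • (-Lp) ^ n -
        ∑ n ∈ Finset.range (N + 1), (c n / n.factorial) • (-L) ^ n) ≤
      (∑ n ∈ Finset.Icc 1 N, |c n| / (n - 1).factorial) * l2OpNorm (Lp - L) := by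
  simpa only [l2OpNorm, map_sub, map_sum, map_smul, map_pow, map_neg, one_pow, mul_one,
    Real.norm_eq_abs] using spcnet_filter_linearly_stable_general hL hLp N c
end

section
/- For every real γ, every real t, and every natural number n, the n-th derivative of the function λ ↦ (1−λ)^γ·e^{tλ} (with (1−λ)^γ = exp(γ·log(1−λ))) evaluated at λ = 0 equals (−1)^n·C_n(γ,t), where C_n(γ,t) = Σ_{j=0}^{n} binom(n,j)·(−t)^j·∏_{i=0}^{n−j−1}(γ−i) is the Poisson–Charlier polynomial. -/
/-- The Poisson–Charlier polynomial
`C_n(γ,t) = Σ_{j=0}^{n} binom(n,j)·(−t)^j·γ·(γ−1)⋯(γ−n+j+1)`, where the product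
`γ·(γ−1)⋯(γ−n+j+1)` is the falling factorial `∏_{i=0}^{n−j−1}(γ−i)`. -/
noncomputable def poissonCharlier (γ t : ℝ) (n : ℕ) : ℝ :=
  ∑ j ∈ Finset.range (n + 1),
    (n.choose j : ℝ) * (-t) ^ j * ∏ i ∈ Finset.range (n - j), (γ - i)

/-!
By Leibniz, each term of the `n`-th derivative of `(c - x) ^ γ * exp (t * x)` pairs `t ^ j` with
`(-1) ^ (n - j) * γ (γ - 1) ⋯ (γ - (n - j) + 1) * (c - x) ^ (γ - (n - j))`. Pulling out
`(-1) ^ n * (c - x) ^ (γ - n)` leaves a factor `(-(t * (c - x))) ^ j`, so the sum is a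
Poisson–Charlier polynomial in the rescaled parameter `t * (c - x)`.
-/

open Finset

theorem poissonCharlier_eq_sum_eval_descPochhammer (γ t : ℝ) (n : ℕ) :
    poissonCharlier γ t n =
      ∑ j ∈ range (n + 1), n.choose j * (-t) ^ j * (descPochhammer ℝ (n - j)).eval γ := by
  simp only [poissonCharlier, descPochhammer_eval_eq_prod_range]

theorem iteratedDeriv_const_sub_rpow (c γ : ℝ) (n : ℕ) (x : ℝ) :
    iteratedDeriv n (fun y : ℝ => (c - y) ^ γ) x =
      (-1) ^ n * ((descPochhammer ℝ n).eval γ * (c - x) ^ (γ - n)) := by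
  simp only [iteratedDeriv_comp_const_sub n (fun y : ℝ => y ^ γ) c, iteratedDeriv_eq_iterate,
    Real.iter_deriv_rpow_const, smul_eq_mul]

theorem iteratedDeriv_exp_mul_const_sub_rpow {c x : ℝ} (hx : x ≠ c) (γ t : ℝ) (n : ℕ) :
    iteratedDeriv n (fun y : ℝ => Real.exp (t * y) * (c - y) ^ γ) x =
      (-1) ^ n * poissonCharlier γ (t * (c - x)) n * (c - x) ^ (γ - n) * Real.exp (t * x) := by
  have hcx : c - x ≠ 0 := sub_ne_zero.mpr hx.symm
  have contDiffAt_exp : ContDiffAt ℝ n (fun y : ℝ => Real.exp (t * y)) x := by fun_prop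
  have contDiffAt_rpow : ContDiffAt ℝ n (fun y : ℝ => (c - y) ^ γ) x :=
    (contDiffAt_const.sub contDiffAt_id).rpow_const_of_ne hcx
  rw [iteratedDeriv_fun_mul contDiffAt_exp contDiffAt_rpow,
    poissonCharlier_eq_sum_eval_descPochhammer, mul_sum, sum_mul, sum_mul]
  refine sum_congr rfl fun j hj => ?_
  have hjn : j ≤ n := mem_range_succ_iff.mp hj
  have sign_split : (-1 : ℝ) ^ (n - j) = (-1) ^ n * (-1) ^ j := by
    rw [← pow_sub_mul_pow (-1 : ℝ) hjn, mul_assoc, ← mul_pow, neg_one_mul, neg_neg, one_pow,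
      mul_one]
  have rpow_split : (c - x) ^ (γ - (n - j : ℕ)) = (c - x) ^ (γ - n) * (c - x) ^ j := by
    rw [← Real.rpow_add_natCast hcx, Nat.cast_sub hjn, sub_sub_eq_add_sub, add_sub_right_comm]
  rw [iteratedDeriv_exp_const_mul, iteratedDeriv_const_sub_rpow, sign_split, rpow_split,
    neg_pow (t * (c - x)), mul_pow]
  ring

theorem iteratedDeriv_generating_function_eq_poissonCharlier_general (γ t : ℝ) (n : ℕ) {x : ℝ}
    (hx : x < 1) :
    iteratedDeriv n
        (fun lam : ℝ => Real.exp (γ * Real.log (1 - lam)) * Real.exp (t * lam)) x =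
      (-1) ^ n * poissonCharlier γ (t * (1 - x)) n * (1 - x) ^ (γ - n) * Real.exp (t * x) := by
  rw [← iteratedDeriv_exp_mul_const_sub_rpow hx.ne]
  refine Filter.EventuallyEq.iteratedDeriv_eq n ?_
  filter_upwards [Iio_mem_nhds hx] with y hy
  rw [Real.rpow_def_of_pos (sub_pos.mpr hy), mul_comm γ, mul_comm]

/-- The `n`-th derivative of `λ ↦ (1−λ)^γ·e^{tλ}` (with `(1−λ)^γ = exp(γ·log(1−λ))`)
at `λ = 0` equals `(−1)^n·C_n(γ,t)`. -/
theorem iteratedDeriv_generating_function_eq_poissonCharlier (γ t : ℝ) (n : ℕ) :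
    iteratedDeriv n
        (fun lam : ℝ => Real.exp (γ * Real.log (1 - lam)) * Real.exp (t * lam)) 0 =
      (-1) ^ n * poissonCharlier γ t n := by
  simpa using iteratedDeriv_generating_function_eq_poissonCharlier_general γ t n one_pos
end

section
/- Let L be any real m×m matrix, k a natural number, and t a real number. Then the matrix series Σ_{n=0}^{∞} C_n(k,t)·(−L)^n/n! converges and equals (I − L)^k · exp(t·L), where exp denotes the matrix exponential and C_n(γ,t) = Σ_{j=0}^{n} binom(n,j)·(−t)^j·∏_{i=0}^{n−j−1}(γ−i) is the Poisson–Charlier polynomial. -/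
/-!
The proof is by induction on `k`. At `k = 0` the polynomials are `C_n(0,t) = (-t)^n`, so the
series in `x = -L` is the exponential series of `-t • x = t • L`. The relation
`C_n(γ+1,t) = C_n(γ,t) + n C_{n-1}(γ,t)` says that raising `γ` by one multiplies the generating
series by `1 + x`.
-/

open Finset

theorem prod_range_add_one_sub_natCast {R : Type*} [CommRing R] (a : R) (n : ℕ) :
    ∏ i ∈ range (n + 1), (a + 1 - i) =
      ∏ i ∈ range (n + 1), (a - i) + (n + 1) * ∏ i ∈ range n, (a - i) := by
  calc ∏ i ∈ range (n + 1), (a + 1 - i)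
      = (∏ i ∈ range n, (a - i)) * (a + 1) := by
        simp only [prod_range_succ', Nat.cast_add, Nat.cast_one, Nat.cast_zero, sub_zero,
          add_sub_add_right_eq_sub]
    _ = ∏ i ∈ range (n + 1), (a - i) + (n + 1) * ∏ i ∈ range n, (a - i) := by
        rw [prod_range_succ]
        ring

theorem poissonCharlier_add_one_succ (γ t : ℝ) (n : ℕ) :
    poissonCharlier (γ + 1) t (n + 1) =
      poissonCharlier γ t (n + 1) + (n + 1) * poissonCharlier γ t n := by
  have term_eq : ∀ j ∈ range (n + 1),
      ((n + 1).choose j : ℝ) * (-t) ^ j * ∏ i ∈ range (n + 1 - j), (γ + 1 - i) =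
        (n + 1).choose j * (-t) ^ j * ∏ i ∈ range (n + 1 - j), (γ - i) +
          (n + 1) * (n.choose j * (-t) ^ j * ∏ i ∈ range (n - j), (γ - i)) := by
    intro j hj
    have hjn : j ≤ n := mem_range_succ_iff.mp hj
    have hchoose : (n.choose j : ℝ) * (n + 1) = (n + 1).choose j * ((n - j : ℕ) + 1) := by
      exact_mod_cast Nat.sub_add_comm hjn ▸ Nat.choose_mul_succ_eq n j
    rw [Nat.sub_add_comm hjn, prod_range_add_one_sub_natCast]
    linear_combination -((-t) ^ j * ∏ i ∈ range (n - j), (γ - i)) * hchoose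
  simp only [poissonCharlier]
  rw [sum_range_succ, sum_congr rfl term_eq, sum_add_distrib, ← mul_sum,
    sum_range_succ _ (n + 1), Nat.sub_self, prod_range_zero, prod_range_zero]
  ring

theorem poissonCharlier_zero_right (γ t : ℝ) : poissonCharlier γ t 0 = 1 := by
  simp [poissonCharlier]

theorem poissonCharlier_zero_left (t : ℝ) (n : ℕ) : poissonCharlier 0 t n = (-t) ^ n := by
  have vanish : ∀ j ∈ range n,
      (n.choose j : ℝ) * (-t) ^ j * ∏ i ∈ range (n - j), ((0 : ℝ) - i) = 0 := by
    intro j hj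
    have hzero : 0 ∈ range (n - j) := mem_range.mpr (Nat.sub_pos_of_lt (mem_range.mp hj))
    rw [prod_eq_zero hzero (by simp), mul_zero]
  rw [poissonCharlier, sum_range_succ, sum_eq_zero vanish]
  simp

theorem hasSum_poissonCharlier_add_one {A : Type*} [Semiring A] [Algebra ℝ A]
    [TopologicalSpace A] [IsTopologicalSemiring A] {γ t : ℝ} {x s : A}
    (h : HasSum (fun n : ℕ => (poissonCharlier γ t n / n.factorial) • x ^ n) s) :
    HasSum (fun n : ℕ => (poissonCharlier (γ + 1) t n / n.factorial) • x ^ n)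
      ((1 + x) * s) := by
  -- The factor `n` cancels the junk value `n - 1 = 0` at `n = 0`.
  have shifted : HasSum
      (fun n : ℕ => (n * poissonCharlier γ t (n - 1) / n.factorial) • x ^ n) (x * s) := by
    have succ_term : ∀ n : ℕ,
        ((n + 1 : ℕ) * poissonCharlier γ t (n + 1 - 1) / (n + 1).factorial) • x ^ (n + 1) =
          x * ((poissonCharlier γ t n / n.factorial) • x ^ n) := by
      intro n
      rw [mul_smul_comm, ← pow_succ', Nat.add_sub_cancel, Nat.factorial_succ, Nat.cast_mul,
        mul_div_mul_left _ _ (Nat.cast_ne_zero.mpr n.succ_ne_zero)]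
    simpa using HasSum.zero_add (f := fun n : ℕ =>
      (n * poissonCharlier γ t (n - 1) / n.factorial) • x ^ n)
      ((h.mul_left x).congr_fun succ_term)
  rw [one_add_mul]
  refine (h.add shifted).congr_fun fun n => ?_
  rw [← add_smul, ← add_div]
  cases n with
  | zero => simp [poissonCharlier_zero_right]
  | succ n => rw [poissonCharlier_add_one_succ, Nat.add_sub_cancel, Nat.cast_succ]

section BanachAlgebra

variable {A : Type*} [NormedRing A] [NormedAlgebra ℝ A] [CompleteSpace A]

theorem hasSum_poissonCharlier_zero_left (x : A) (t : ℝ) :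
    HasSum (fun n : ℕ => (poissonCharlier 0 t n / n.factorial) • x ^ n)
      (NormedSpace.exp (-t • x)) := by
  refine (NormedSpace.exp_series_hasSum_exp' (𝕂 := ℝ) (-t • x)).congr_fun fun n => ?_
  rw [poissonCharlier_zero_left, smul_pow, smul_smul, div_eq_inv_mul]

theorem poissonCharlier_matrix_generating_function_general (L : A) (k : ℕ) (t : ℝ) :
    HasSum (fun n : ℕ => (poissonCharlier (k : ℝ) t n / n.factorial) • (-L) ^ n)
      ((1 - L) ^ k * NormedSpace.exp (t • L)) := by
  induction k with
  | zero => simpa using hasSum_poissonCharlier_zero_left (-L) t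
  | succ k ih =>
    simpa only [Nat.cast_succ, pow_succ', mul_assoc, sub_eq_add_neg] using
      hasSum_poissonCharlier_add_one ih

end BanachAlgebra

/-- For any real `m × m` matrix `L`, natural number `k` and real `t`, the matrix
series `Σ_{n=0}^{∞} C_n(k,t)·(−L)^n/n!` converges and equals `(I − L)^k · exp(t·L)`,
where `exp` is the matrix exponential. -/
theorem poissonCharlier_matrix_generating_function {m : ℕ}
    (L : Matrix (Fin m) (Fin m) ℝ) (k : ℕ) (t : ℝ) :
    HasSum (fun n : ℕ => (poissonCharlier (k : ℝ) t n / n.factorial) • (-L) ^ n)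
      ((1 - L) ^ k * NormedSpace.exp (t • L)) := by
  let : NormedRing (Matrix (Fin m) (Fin m) ℝ) := Matrix.linftyOpNormedRing
  let : NormedAlgebra ℝ (Matrix (Fin m) (Fin m) ℝ) := Matrix.linftyOpNormedAlgebra
  exact poissonCharlier_matrix_generating_function_general L k t
end
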